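/- Let q, n, d, m be positive integers with q ≥ 2 such that d = m(qd − (q−1)(n−1)) and such that n − d does not divide m(n−1). If r ∈ {1, …, q−1} satisfies n(n−1−d)(r−1)r < (q−r+1)(qm(q+r−2) − 2r), then A_q(n,d) < q²m − r; that is, every code C ⊆ (Fin q)^n with minimum Hamming distance at least d satisfies |C| ≤ q²m − r − 1. -/

import Mathlib

/-- Number of agreements as an integer. -/
def agr {n q : ℕ} (u v : Fin n → Fin q) : ℤ := ∑ k, if u k = v k then 1 else 0

/-- Excess distance of a pair. -/
def exc {n q : ℕ} (d : ℕ) (u v : Fin n → Fin q) : ℤ :=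
  if u = v then 0 else (hammingDist u v : ℤ) - d

/-- Words of `B` with symbol `a` in position `k`. -/
def blk {n q : ℕ} (B : Finset (Fin n → Fin q)) (k : Fin n) (a : Fin q) :
    Finset (Fin n → Fin q) := B.filter (fun u => u k = a)

lemma dist_eq_agr {n q : ℕ} (u v : Fin n → Fin q) : (hammingDist u v : ℤ) = n - agr u v := by
  have h : (hammingDist u v : ℤ) = ∑ k, if u k ≠ v k then (1:ℤ) else 0 := by
    rw [hammingDist, Finset.card_filter]; push_cast; rfl
  have h2 : (n : ℤ) = ∑ k : Fin n, (1:ℤ) := by simp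
  rw [h, agr]
  rw [eq_sub_iff_add_eq, ← Finset.sum_add_distrib]
  rw [h2]
  apply Finset.sum_congr rfl
  intro k _
  by_cases hk : u k = v k <;> simp [hk]

lemma agr_self {n q : ℕ} (u : Fin n → Fin q) : agr u u = n := by simp [agr]

lemma agr_nonneg {n q : ℕ} (u v : Fin n → Fin q) : 0 ≤ agr u v := by
  apply Finset.sum_nonneg; intro k _; split_ifs <;> simp

lemma agr_comm {n q : ℕ} (u v : Fin n → Fin q) : agr u v = agr v u := by
  simp only [agr, eq_comm]

lemma sum_agree {n q : ℕ} (B : Finset (Fin n → Fin q)) (k : Fin n)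
    (x : (Fin n → Fin q) → (Fin n → Fin q) → ℤ) :
    ∑ u ∈ B, ∑ v ∈ B, (if u k = v k then x u v else 0)
      = ∑ a, ∑ u ∈ blk B k a, ∑ v ∈ blk B k a, x u v := by
  rw [← Finset.sum_fiberwise B (fun u => u k)]
  apply Finset.sum_congr rfl
  intro a _
  apply Finset.sum_congr rfl
  intro u hu
  have hu' : u k = a := (Finset.mem_filter.1 hu).2
  rw [blk, Finset.sum_filter]
  apply Finset.sum_congr rfl
  intro v _
  rw [hu']
  simp only [eq_comm]

lemma sum_card_blk {n q : ℕ} (B : Finset (Fin n → Fin q)) (k : Fin n) :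
    ∑ a, ((blk B k a).card : ℤ) = B.card := by
  have := Finset.sum_fiberwise B (fun u => u k) (fun _ => (1:ℤ))
  simpa [blk] using this

lemma sum_agr {n q : ℕ} (B : Finset (Fin n → Fin q)) :
    ∑ u ∈ B, ∑ v ∈ B, agr u v = ∑ k, ∑ a, ((blk B k a).card : ℤ) ^ 2 := by
  have h : ∀ k, ∑ a, ((blk B k a).card : ℤ) ^ 2
      = ∑ u ∈ B, ∑ v ∈ B, (if u k = v k then (1:ℤ) else 0) := by
    intro k
    rw [sum_agree B k (fun _ _ => 1)]
    apply Finset.sum_congr rfl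
    intro a _
    simp [pow_two]
  simp only [h, agr]
  rw [Finset.sum_comm' (s := Finset.univ) (t := fun _ => B) (t' := B) (s' := fun _ => Finset.univ)
    (by simp)]
  apply Finset.sum_congr rfl
  intro u _
  rw [Finset.sum_comm]

/-- Quadratic defect. -/
def Sdef {n q : ℕ} (m : ℕ) (j : Fin n) (B : Finset (Fin n → Fin q)) : ℤ :=
  ∑ k ∈ Finset.univ.erase j, ∑ a, ((m : ℤ) - (blk B k a).card) ^ 2

lemma sum_exc {n q : ℕ} (d : ℕ) (B : Finset (Fin n → Fin q)) :
    ∑ u ∈ B, ∑ v ∈ B, exc d u v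
      = ((n : ℤ) - d) * B.card * (B.card - 1) - (∑ u ∈ B, ∑ v ∈ B, agr u v - n * B.card) := by
  have h : ∀ u ∈ B, ∑ v ∈ B, exc d u v = ((n:ℤ) - d) * (B.card - 1) - ∑ v ∈ B, agr u v + n := by
    intro u hu
    have : ∀ v ∈ B, exc d u v = ((n:ℤ) - d) - agr u v + (if u = v then (d:ℤ) else 0) := by
      intro v _
      unfold exc
      split_ifs with h
      · subst h; rw [agr_self]; ring
      · rw [dist_eq_agr]; ring
    rw [Finset.sum_congr rfl this, Finset.sum_add_distrib, Finset.sum_sub_distrib]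
    simp [hu]
    ring
  rw [Finset.sum_congr rfl h, Finset.sum_add_distrib, Finset.sum_sub_distrib]
  simp
  ring

lemma exc_identity {n q : ℕ} (d m : ℕ)
    (heq : (d : ℤ) = (m : ℤ) * ((q : ℤ) * d - ((q : ℤ) - 1) * ((n : ℤ) - 1)))
    (j : Fin n) (b : Fin q) (B : Finset (Fin n → Fin q)) (hB : ∀ u ∈ B, u j = b) (t : ℤ)
    (ht : (B.card : ℤ) = q * m - t) :
    ∑ u ∈ B, ∑ v ∈ B, exc d u v = ((n : ℤ) - 1 - d) * t ^ 2 + d * t - Sdef m j B := by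
  have h1 : ∀ k, ∑ a, ((blk B k a).card : ℤ) ^ 2
      = ∑ a, ((m : ℤ) - (blk B k a).card) ^ 2 + 2 * m * B.card - q * m ^ 2 := by
    intro k
    rw [← sum_card_blk B k, Finset.mul_sum, ← Finset.sum_add_distrib]
    have : (q : ℤ) * m ^ 2 = ∑ a : Fin q, (m : ℤ) ^ 2 := by simp
    rw [this, ← Finset.sum_sub_distrib]
    apply Finset.sum_congr rfl
    intro a _
    ring
  have h2 : ∑ a, ((blk B j a).card : ℤ) ^ 2 = (B.card : ℤ) ^ 2 := by
    rw [Finset.sum_eq_single b]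
    · congr 3
      exact Finset.filter_true_of_mem hB
    · intro a _ hab
      have : blk B j a = ∅ := by
        apply Finset.filter_false_of_mem
        intro u hu h
        exact hab (by rw [← h, hB u hu])
      simp [this]
    · simp
  have hcard : ((Finset.univ.erase j).card : ℤ) = n - 1 := by
    rw [Finset.card_erase_of_mem (Finset.mem_univ j)]
    have := j.pos
    simp
    omega
  have h3 : ∑ u ∈ B, ∑ v ∈ B, agr u v
      = (B.card : ℤ) ^ 2 + (Sdef m j B + ((n : ℤ) - 1) * (2 * m * B.card - q * m ^ 2)) := by
    rw [sum_agr, ← Finset.add_sum_erase _ _ (Finset.mem_univ j), h2]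
    congr 1
    rw [Finset.sum_congr rfl (fun k _ => h1 k)]
    simp only [add_sub_assoc]
    rw [Finset.sum_add_distrib, Finset.sum_const, nsmul_eq_mul, hcard, Sdef]
  rw [sum_exc, h3, ht]
  linear_combination (q * m - 2 * t : ℤ) * heq

lemma Sdef_bound {n q : ℕ} (m : ℕ) (j : Fin n) (B : Finset (Fin n → Fin q)) (t : ℤ)
    (ht : (B.card : ℤ) = q * m - t) : ((n : ℤ) - 1) * |t| ≤ Sdef m j B := by
  have hcard : ((Finset.univ.erase j).card : ℤ) = n - 1 := by
    rw [Finset.card_erase_of_mem (Finset.mem_univ j)]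
    have := j.pos
    simp
    omega
  rw [← hcard, ← nsmul_eq_mul]
  apply Finset.card_nsmul_le_sum
  intro k _
  have h : t = ∑ a, ((m : ℤ) - (blk B k a).card) := by
    rw [Finset.sum_sub_distrib, sum_card_blk, ht]; simp
  rw [h]
  refine (Finset.abs_sum_le_sum_abs _ _).trans (Finset.sum_le_sum ?_)
  intro a _
  rw [← sq_abs]
  have := abs_nonneg ((m : ℤ) - (blk B k a).card)
  nlinarith [sq_nonneg (|(m : ℤ) - (blk B k a).card|), Int.le_self_sq (|(m : ℤ) - (blk B k a).card|)]

lemma exc_nonneg {n q d : ℕ} {C : Finset (Fin n → Fin q)}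
    (hC : ∀ u ∈ C, ∀ v ∈ C, u ≠ v → d ≤ hammingDist u v) :
    ∀ u ∈ C, ∀ v ∈ C, 0 ≤ exc d u v := by
  intro u hu v hv
  unfold exc
  split_ifs with h
  · rfl
  · have := hC u hu v hv h
    omega

/-- Plotkin bound for a block. -/
lemma plotkin {n q : ℕ} (d m : ℕ) (hd : 0 < d)
    (heq : (d : ℤ) = (m : ℤ) * ((q : ℤ) * d - ((q : ℤ) - 1) * ((n : ℤ) - 1)))
    (j : Fin n) (b : Fin q) (B : Finset (Fin n → Fin q)) (hB : ∀ u ∈ B, u j = b)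
    (hC : ∀ u ∈ B, ∀ v ∈ B, u ≠ v → d ≤ hammingDist u v) : B.card ≤ q * m := by
  by_contra! h
  obtain ⟨B', hB', hc⟩ := Finset.exists_subset_card_eq (s := B) (n := q * m + 1) h
  have ht : (B'.card : ℤ) = q * m - (-1) := by rw [hc]; push_cast; ring
  have h1 := exc_identity d m heq j b B' (fun u hu => hB u (hB' hu)) (-1) ht
  have h2 := Sdef_bound m j B' (-1) ht
  have h3 : 0 ≤ ∑ u ∈ B', ∑ v ∈ B', exc d u v :=
    Finset.sum_nonneg fun u hu => Finset.sum_nonneg fun v hv =>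
      exc_nonneg hC u (hB' hu) v (hB' hv)
  norm_num at h1 h2
  rw [h1] at h3
  omega

/-- A word outside a full block has an irregular partner in the block. -/
lemma exists_irr {n q : ℕ} (d m : ℕ)
    (heq : (d : ℤ) = (m : ℤ) * ((q : ℤ) * d - ((q : ℤ) - 1) * ((n : ℤ) - 1)))
    (hndvd : ¬ ((n : ℤ) - (d : ℤ) ∣ (m : ℤ) * ((n : ℤ) - 1)))
    (C : Finset (Fin n → Fin q))
    (hC : ∀ u ∈ C, ∀ v ∈ C, u ≠ v → d ≤ hammingDist u v)
    (j : Fin n) (b : Fin q) (hfull : (blk C j b).card = q * m)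
    (u : Fin n → Fin q) (hu : u ∈ C) (hub : u j ≠ b) :
    ∃ v ∈ blk C j b, d < hammingDist u v ∧ 0 < agr u v := by
  by_contra! hcon
  have hsub : ∀ v ∈ blk C j b, v ∈ C := fun v hv => (Finset.mem_filter.1 hv).1
  have hsym : ∀ v ∈ blk C j b, v j = b := fun v hv => (Finset.mem_filter.1 hv).2
  have ht : ((blk C j b).card : ℤ) = q * m - 0 := by rw [hfull]; push_cast; ring
  have h1 := exc_identity d m heq j b _ hsym 0 ht
  have h3 : 0 ≤ ∑ u ∈ blk C j b, ∑ v ∈ blk C j b, exc d u v :=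
    Finset.sum_nonneg fun u hu => Finset.sum_nonneg fun v hv =>
      exc_nonneg hC u (hsub u hu) v (hsub v hv)
  have hS : Sdef m j (blk C j b) ≤ 0 := by
    rw [h1] at h3; norm_num at h3; exact h3
  have hS0 : Sdef m j (blk C j b) = 0 :=
    le_antisymm hS (Finset.sum_nonneg fun k _ => Finset.sum_nonneg fun a _ => sq_nonneg _)
  have hcm : ∀ k, k ≠ j → ∀ a, ((blk (blk C j b) k a).card : ℤ) = m := by
    intro k hk a
    unfold Sdef at hS0
    rw [Finset.sum_eq_zero_iff_of_nonneg
      (fun k _ => Finset.sum_nonneg fun a _ => sq_nonneg _)] at hS0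
    have := hS0 k (by simp [hk])
    rw [Finset.sum_eq_zero_iff_of_nonneg (fun a _ => sq_nonneg _)] at this
    have := this a (Finset.mem_univ a)
    have := pow_eq_zero_iff (two_ne_zero) |>.1 this
    omega
  have hsum : ∑ v ∈ blk C j b, agr u v = (m : ℤ) * ((n : ℤ) - 1) := by
    unfold agr
    rw [Finset.sum_comm, ← Finset.add_sum_erase _ _ (Finset.mem_univ j)]
    have hz : ∑ v ∈ blk C j b, (if u j = v j then (1:ℤ) else 0) = 0 := by
      apply Finset.sum_eq_zero
      intro v hv
      rw [hsym v hv, if_neg hub]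
    have ho : ∀ k ∈ Finset.univ.erase j,
        ∑ v ∈ blk C j b, (if u k = v k then (1:ℤ) else 0) = m := by
      intro k hk
      rw [← hcm k (Finset.ne_of_mem_erase hk) (u k)]
      rw [blk.eq_def (blk C j b), Finset.card_filter]
      push_cast
      simp only [eq_comm]
    rw [hz, Finset.sum_congr rfl ho, Finset.sum_const, nsmul_eq_mul,
      Finset.card_erase_of_mem (Finset.mem_univ j)]
    have := j.pos
    simp only [Finset.card_univ, Fintype.card_fin]
    rw [Nat.cast_sub (by omega)]
    push_cast
    ring
  apply hndvd
  rw [← hsum]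
  apply Finset.dvd_sum
  intro v hv
  have hne : u ≠ v := by
    rintro rfl
    exact hub (hsym _ hv)
  have hdist := hC u hu v (hsub v hv) hne
  by_cases hlt : d < hammingDist u v
  · have h0 := hcon v hv hlt
    have : agr u v = 0 := le_antisymm h0 (agr_nonneg u v)
    rw [this]; exact dvd_zero _
  · have he : (hammingDist u v : ℤ) = d := by omega
    rw [dist_eq_agr] at he
    rw [show agr u v = (n : ℤ) - d by linarith]

open Classical in
/-- Indicator of irregular pairs. -/
noncomputable def irr {n q : ℕ} (d : ℕ) (u v : Fin n → Fin q) : ℤ :=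
  if d < hammingDist u v ∧ 0 < agr u v then 1 else 0

lemma irr_nonneg {n q : ℕ} (d : ℕ) (u v : Fin n → Fin q) : 0 ≤ irr d u v := by
  unfold irr; split_ifs <;> simp

lemma irr_comm {n q : ℕ} (d : ℕ) (u v : Fin n → Fin q) : irr d u v = irr d v u := by
  unfold irr; rw [hammingDist_comm, agr_comm]

lemma irr_le {n q d : ℕ} {C : Finset (Fin n → Fin q)}
    (hC : ∀ u ∈ C, ∀ v ∈ C, u ≠ v → d ≤ hammingDist u v) :
    ∀ u ∈ C, ∀ v ∈ C, irr d u v ≤ agr u v * exc d u v := by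
  intro u hu v hv
  have h0 := exc_nonneg hC u hu v hv
  have h1 := agr_nonneg u v
  unfold irr
  split_ifs with h
  · obtain ⟨ha, hb⟩ := h
    have hne : u ≠ v := by
      rintro rfl
      simp at ha
    have : 1 ≤ exc d u v := by
      rw [exc, if_neg hne]; omega
    nlinarith
  · positivity

lemma sum_agr_exc {n q : ℕ} (d : ℕ) (C : Finset (Fin n → Fin q)) :
    ∑ u ∈ C, ∑ v ∈ C, agr u v * exc d u v
      = ∑ k, ∑ a, ∑ u ∈ blk C k a, ∑ v ∈ blk C k a, exc d u v := by
  simp only [← sum_agree]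
  rw [Finset.sum_comm' (s := Finset.univ) (t := fun _ => C) (t' := C) (s' := fun _ => Finset.univ)
    (by simp)]
  apply Finset.sum_congr rfl
  intro u _
  rw [Finset.sum_comm]
  apply Finset.sum_congr rfl
  intro v _
  rw [agr, Finset.sum_mul]
  apply Finset.sum_congr rfl
  intro k _
  split_ifs <;> simp

lemma main_aux (q n d m r : ℕ)
    (hq : 2 ≤ q) (hn : 0 < n) (hd : 0 < d) (hm : 0 < m)
    (heq : (d : ℤ) = (m : ℤ) * ((q : ℤ) * d - ((q : ℤ) - 1) * ((n : ℤ) - 1)))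
    (hndvd : ¬ ((n : ℤ) - (d : ℤ) ∣ (m : ℤ) * ((n : ℤ) - 1)))
    (hr1 : 1 ≤ r) (hr2 : r ≤ q - 1)
    (hineq : (n : ℤ) * ((n : ℤ) - 1 - (d : ℤ)) * ((r : ℤ) - 1) * (r : ℤ)
      < ((q : ℤ) - (r : ℤ) + 1) * ((q : ℤ) * (m : ℤ) * ((q : ℤ) + (r : ℤ) - 2) - 2 * (r : ℤ)))
    (C : Finset (Fin n → Fin q))
    (hC : ∀ u ∈ C, ∀ v ∈ C, u ≠ v → d ≤ hammingDist u v)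
    (hcard : (C.card : ℤ) = (q : ℤ) ^ 2 * (m : ℤ) - (r : ℤ)) : False := by
  have hrq : (r : ℤ) ≤ q - 1 := by omega
  have hdn : 0 ≤ (n : ℤ) - 1 - d := by
    by_contra hlt
    have h2 : (n : ℤ) - 1 ≤ d - 1 := by omega
    have h3 : ((q : ℤ) - 1) * ((n : ℤ) - 1) ≤ ((q : ℤ) - 1) * (d - 1) := by
      apply mul_le_mul_of_nonneg_left h2; omega
    have h4 : (d : ℤ) + 1 ≤ (q : ℤ) * d - ((q : ℤ) - 1) * ((n : ℤ) - 1) := by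
      have : (2:ℤ) ≤ q := by exact_mod_cast hq
      nlinarith
    have h5 : (1 : ℤ) ≤ m := by exact_mod_cast hm
    nlinarith
  -- deficits
  set e : Fin n → Fin q → ℤ := fun k a => (q : ℤ) * m - (blk C k a).card with he
  have hsub : ∀ k a, ∀ v ∈ blk C k a, v ∈ C := fun k a v hv => (Finset.mem_filter.1 hv).1
  have hsym : ∀ k a, ∀ v ∈ blk C k a, v k = a := fun k a v hv => (Finset.mem_filter.1 hv).2
  have he0 : ∀ k a, 0 ≤ e k a := by
    intro k a
    have := plotkin d m hd heq k a (blk C k a) (hsym k a)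
      (fun u hu v hv => hC u (hsub k a u hu) v (hsub k a v hv))
    simp only [he]
    have h : ((blk C k a).card : ℤ) ≤ q * m := by exact_mod_cast this
    linarith
  have hesum : ∀ k, ∑ a, e k a = r := by
    intro k
    simp only [he]
    rw [Finset.sum_sub_distrib, sum_card_blk, hcard]
    simp
    ring
  have hbound : ∀ k a, ∑ u ∈ blk C k a, ∑ v ∈ blk C k a, exc d u v
      ≤ ((n : ℤ) - 1 - d) * (e k a * (e k a - 1)) := by
    intro k a
    have ht : ((blk C k a).card : ℤ) = q * m - e k a := by simp [he]
    have h1 := exc_identity d m heq k a _ (hsym k a) _ ht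
    have h2 := Sdef_bound m k _ _ ht
    rw [abs_of_nonneg (he0 k a)] at h2
    rw [h1]
    linarith
  have hcol : ∀ k, ∑ a, (e k a * (e k a - 1)) ≤ r * (r - 1) := by
    intro k
    have : ∑ a, (e k a * (e k a - 1)) ≤ ∑ a, (e k a * (r - 1)) := by
      apply Finset.sum_le_sum
      intro a _
      have : e k a ≤ r := by
        rw [← hesum k]
        exact Finset.single_le_sum (f := e k) (fun a _ => he0 k a) (Finset.mem_univ a)
      apply mul_le_mul_of_nonneg_left _ (he0 k a)
      linarith
    rw [← Finset.sum_mul, hesum] at this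
    exact this
  have hup : ∑ u ∈ C, ∑ v ∈ C, irr d u v
      ≤ (n : ℤ) * ((n : ℤ) - 1 - (d : ℤ)) * ((r : ℤ) - 1) * (r : ℤ) := by
    calc ∑ u ∈ C, ∑ v ∈ C, irr d u v ≤ ∑ u ∈ C, ∑ v ∈ C, agr u v * exc d u v :=
          Finset.sum_le_sum fun u hu => Finset.sum_le_sum fun v hv => irr_le hC u hu v hv
      _ = ∑ k, ∑ a, ∑ u ∈ blk C k a, ∑ v ∈ blk C k a, exc d u v := sum_agr_exc d C
      _ ≤ ∑ k : Fin n, ((n : ℤ) - 1 - d) * (r * (r - 1)) := by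
          apply Finset.sum_le_sum
          intro k _
          refine (Finset.sum_le_sum fun a _ => hbound k a).trans ?_
          rw [← Finset.mul_sum]
          exact mul_le_mul_of_nonneg_left (hcol k) hdn
      _ = _ := by simp; ring
  have hirr : ∀ k a, e k a = 0 → ∀ u ∈ C, u k ≠ a → 1 ≤ ∑ v ∈ blk C k a, irr d u v := by
    intro k a hea u hu hua
    have hfull : (blk C k a).card = q * m := by
      have : ((blk C k a).card : ℤ) = q * m := by simp only [he] at hea; linarith
      exact_mod_cast this
    obtain ⟨v, hv, hv2⟩ := exists_irr d m heq hndvd C hC k a hfull u hu hua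
    have : irr d u v = 1 := by rw [irr, if_pos hv2]
    rw [← this]
    exact Finset.single_le_sum (f := fun v => irr d u v) (fun v _ => irr_nonneg d u v) hv
  -- the number of zero deficits
  have hzero : ∀ k, (q : ℤ) - r + (∑ a, if e k a = 0 then 0 else (e k a - 1))
      ≤ (Finset.univ.filter (fun a => e k a = 0)).card := by
    intro k
    rw [Finset.card_filter]
    push_cast
    have h1 : (q : ℤ) = ∑ a : Fin q, (1:ℤ) := by simp
    rw [← hesum k]
    nth_rw 1 [h1]
    rw [← Finset.sum_sub_distrib, ← Finset.sum_add_distrib]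
    apply Finset.sum_le_sum
    intro a _
    split_ifs with h
    · rw [h]; simp
    · simp
  -- existence of an irregular pair
  have hpos : 0 < ∑ u ∈ C, ∑ v ∈ C, irr d u v := by
    let k : Fin n := ⟨0, hn⟩
    have h1 := hzero k
    have h2 : 0 ≤ ∑ a, (if e k a = 0 then 0 else (e k a - 1)) := by
      apply Finset.sum_nonneg
      intro a _
      split_ifs with h
      · rfl
      · have := he0 k a
        omega
    have h3 : 0 < (Finset.univ.filter (fun a => e k a = 0)).card := by omega
    obtain ⟨a, ha⟩ := Finset.card_pos.1 h3
    have hea : e k a = 0 := (Finset.mem_filter.1 ha).2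
    have : ∃ u ∈ C, u k ≠ a := by
      by_contra! hall
      have hb : blk C k a = C := Finset.filter_true_of_mem hall
      simp only [he] at hea
      rw [hb, hcard] at hea
      have hq' : (2:ℤ) ≤ q := by exact_mod_cast hq
      have hm' : (1:ℤ) ≤ m := by exact_mod_cast hm
      have h5 : (q:ℤ) * m * (q - 1) = r := by linarith
      have h6 : (2:ℤ) ≤ q * m := by nlinarith
      nlinarith
    obtain ⟨u, hu, hua⟩ := this
    have h4 := hirr k a hea u hu hua
    have h5 : ∑ v ∈ blk C k a, irr d u v ≤ ∑ v ∈ C, irr d u v :=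
      Finset.sum_le_sum_of_subset_of_nonneg (Finset.filter_subset _ _)
        (fun v _ _ => irr_nonneg d u v)
    have h6 : ∑ v ∈ C, irr d u v ≤ ∑ u ∈ C, ∑ v ∈ C, irr d u v :=
      Finset.single_le_sum (f := fun u => ∑ v ∈ C, irr d u v)
        (fun u _ => Finset.sum_nonneg fun v _ => irr_nonneg d u v) hu
    linarith
  -- a column with a large deficit
  have hlarge : ∃ k a, 2 ≤ e k a := by
    by_contra! hall
    have : ∑ u ∈ C, ∑ v ∈ C, irr d u v ≤ 0 := by
      calc ∑ u ∈ C, ∑ v ∈ C, irr d u v ≤ ∑ u ∈ C, ∑ v ∈ C, agr u v * exc d u v :=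
            Finset.sum_le_sum fun u hu => Finset.sum_le_sum fun v hv => irr_le hC u hu v hv
        _ = ∑ k, ∑ a, ∑ u ∈ blk C k a, ∑ v ∈ blk C k a, exc d u v := sum_agr_exc d C
        _ ≤ 0 := by
          apply Finset.sum_nonpos
          intro k _
          apply Finset.sum_nonpos
          intro a _
          refine (hbound k a).trans ?_
          have h1 := hall k a
          have h2 := he0 k a
          have h3 : e k a = 0 ∨ e k a = 1 := by omega
          rcases h3 with h3 | h3 <;> simp [h3]
    linarith
  obtain ⟨j, a0, hj⟩ := hlarge
  have hzc : (q : ℤ) - r + 1 ≤ (Finset.univ.filter (fun a => e j a = 0)).card := by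
    have h1 := hzero j
    have h2 : 1 ≤ ∑ a, (if e j a = 0 then 0 else (e j a - 1)) := by
      have h3 := Finset.single_le_sum (f := fun a => if e j a = 0 then 0 else (e j a - 1))
        (s := Finset.univ) (by
          intro a _
          have := he0 j a
          split_ifs with h
          · rfl
          · show (0:ℤ) ≤ e j a - 1
            omega) (Finset.mem_univ a0)
      rw [if_neg (by omega)] at h3
      linarith
    linarith
  obtain ⟨F, hF, hFc⟩ := Finset.exists_subset_card_eq
    (s := Finset.univ.filter (fun a => e j a = 0)) (n := q - r + 1) (by omega)
  have hFe : ∀ a ∈ F, e j a = 0 := fun a ha => (Finset.mem_filter.1 (hF ha)).2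
  have hFc' : (F.card : ℤ) = q - r + 1 := by rw [hFc]; omega
  set P := C.filter (fun u => u j ∈ F) with hP
  set N := C.filter (fun u => ¬ u j ∈ F) with hN
  have hfib : ∀ f : (Fin n → Fin q) → ℤ, ∑ v ∈ P, f v = ∑ a ∈ F, ∑ v ∈ blk C j a, f v := by
    intro f
    rw [← Finset.sum_fiberwise_of_maps_to (s := P) (t := F) (g := fun v => v j)
      (fun v hv => (Finset.mem_filter.1 hv).2)]
    apply Finset.sum_congr rfl
    intro a ha
    apply Finset.sum_congr _ (fun _ _ => rfl)
    ext v
    simp only [hP, blk, Finset.mem_filter]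
    constructor
    · rintro ⟨⟨h1, _⟩, h3⟩; exact ⟨h1, h3⟩
    · rintro ⟨h1, h3⟩; exact ⟨⟨h1, h3 ▸ ha⟩, h3⟩
  have hPc : (P.card : ℤ) = F.card * (q * m) := by
    have h1 := hfib (fun _ => 1)
    simp only [Finset.sum_const, nsmul_eq_mul, mul_one] at h1
    rw [h1, ← nsmul_eq_mul, ← Finset.sum_const]
    apply Finset.sum_congr rfl
    intro a ha
    have := hFe a ha
    simp only [he] at this
    linarith
  have hNc : (P.card : ℤ) + N.card = C.card := by
    exact_mod_cast Finset.card_filter_add_card_filter_not (s := C) (fun u => u j ∈ F)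
  have hNP : ∀ u ∈ N, (F.card : ℤ) ≤ ∑ v ∈ P, irr d u v := by
    intro u hu
    obtain ⟨hu1, hu2⟩ := Finset.mem_filter.1 hu
    rw [hfib, Finset.card_eq_sum_ones]
    push_cast
    apply Finset.sum_le_sum
    intro a ha
    exact hirr j a (hFe a ha) u hu1 (fun h => hu2 (h ▸ ha))
  have hPP : ∀ u ∈ P, (F.card : ℤ) - 1 ≤ ∑ v ∈ P, irr d u v := by
    intro u hu
    obtain ⟨hu1, hu2⟩ := Finset.mem_filter.1 hu
    rw [hfib, ← Finset.add_sum_erase _ _ hu2]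
    have h1 : 0 ≤ ∑ v ∈ blk C j (u j), irr d u v := Finset.sum_nonneg fun v _ => irr_nonneg d u v
    have h2 : ((F.erase (u j)).card : ℤ) = F.card - 1 := by
      rw [Finset.card_erase_of_mem hu2]
      have := Finset.card_pos.2 ⟨_, hu2⟩
      omega
    have h3 : ((F.erase (u j)).card : ℤ)
        ≤ ∑ a ∈ F.erase (u j), ∑ v ∈ blk C j a, irr d u v := by
      rw [Finset.card_eq_sum_ones]
      push_cast
      apply Finset.sum_le_sum
      intro a ha
      exact hirr j a (hFe a (Finset.mem_of_mem_erase ha)) u hu1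
        (Finset.ne_of_mem_erase ha).symm
    linarith
  have hsplit : ∀ f : (Fin n → Fin q) → ℤ, ∑ v ∈ C, f v = ∑ v ∈ P, f v + ∑ v ∈ N, f v :=
    fun f => (Finset.sum_filter_add_sum_filter_not C _ f).symm
  have hlow : (P.card : ℤ) * (F.card - 1) + 2 * (N.card * F.card)
      ≤ ∑ u ∈ C, ∑ v ∈ C, irr d u v := by
    have h1 : (P.card : ℤ) * (F.card - 1) ≤ ∑ u ∈ P, ∑ v ∈ P, irr d u v := by
      rw [← nsmul_eq_mul]
      exact Finset.card_nsmul_le_sum _ _ _ hPP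
    have h2 : (N.card : ℤ) * F.card ≤ ∑ u ∈ N, ∑ v ∈ P, irr d u v := by
      rw [← nsmul_eq_mul]
      exact Finset.card_nsmul_le_sum _ _ _ hNP
    have h3 : ∑ u ∈ P, ∑ v ∈ N, irr d u v = ∑ u ∈ N, ∑ v ∈ P, irr d u v := by
      rw [Finset.sum_comm]
      simp only [irr_comm]
    have h4 : 0 ≤ ∑ u ∈ N, ∑ v ∈ N, irr d u v :=
      Finset.sum_nonneg fun u _ => Finset.sum_nonneg fun v _ => irr_nonneg d u v
    rw [hsplit]
    simp only [hsplit, Finset.sum_add_distrib]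
    linarith
  have hNc' : (N.card : ℤ) = q ^ 2 * m - r - (q - r + 1) * (q * m) := by
    rw [hPc, hFc', hcard] at hNc; linarith
  rw [hPc, hNc', hFc'] at hlow
  have hfin := hlow.trans hup
  nlinarith

/-- A strengthening of the Plotkin bound (Theorem from Chapter 4 of the thesis):
if `d = m(qd - (q-1)(n-1))`, `n - d` does not divide `m(n-1)`, and
`r ∈ {1,…,q-1}` satisfies `n(n-1-d)(r-1)r < (q-r+1)(qm(q+r-2)-2r)`,
then `A_q(n,d) < q²m - r`, i.e. every code `C ⊆ (Fin q)^n` with minimum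
Hamming distance at least `d` satisfies `|C| ≤ q²m - r - 1`. -/
theorem divisibility_bound (q n d m r : ℕ)
    (hq : 2 ≤ q) (hn : 0 < n) (hd : 0 < d) (hm : 0 < m)
    (heq : (d : ℤ) = (m : ℤ) * ((q : ℤ) * d - ((q : ℤ) - 1) * ((n : ℤ) - 1)))
    (hndvd : ¬ ((n : ℤ) - (d : ℤ) ∣ (m : ℤ) * ((n : ℤ) - 1)))
    (hr1 : 1 ≤ r) (hr2 : r ≤ q - 1)
    (hineq : (n : ℤ) * ((n : ℤ) - 1 - (d : ℤ)) * ((r : ℤ) - 1) * (r : ℤ)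
      < ((q : ℤ) - (r : ℤ) + 1) * ((q : ℤ) * (m : ℤ) * ((q : ℤ) + (r : ℤ) - 2) - 2 * (r : ℤ)))
    (C : Finset (Fin n → Fin q))
    (hC : ∀ u ∈ C, ∀ v ∈ C, u ≠ v → d ≤ hammingDist u v) :
    (C.card : ℤ) ≤ (q : ℤ) ^ 2 * (m : ℤ) - (r : ℤ) - 1 := by
  by_contra! hlt
  have hge : q ^ 2 * m - r ≤ C.card := by
    have : ((q ^ 2 * m : ℕ) : ℤ) = (q : ℤ) ^ 2 * m := by push_cast; rfl
    omega
  have hle : r ≤ q ^ 2 * m := by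
    have h1 : r ≤ q := by omega
    nlinarith
  obtain ⟨C', hC', hc⟩ := Finset.exists_subset_card_eq hge
  refine main_aux q n d m r hq hn hd hm heq hndvd hr1 hr2 hineq C'
    (fun u hu v hv => hC u (hC' hu) v (hC' hv)) ?_
  rw [hc, Nat.cast_sub hle]
  push_cast
  rfl
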